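/- Fix an infinite data domain $D$. A register automaton $\mathcal A=(L,R,\Sigma,T)$ has finite sets $L$ of locations, $R$ of registers and $\Sigma$ of letters, and a set $T\subseteq L\times\Sigma\times\Phi(R)\times 2^R\times L$ of transitions, where $\Phi(R)$ consists of the guards built from $\mathsf{true}$ and the atoms $(=r)$, $r\in R$, by conjunction and negation; a pair $(\nu,d)$ with $\nu:R\to D$ and $d\in D$ satisfies $(=r)$ iff $\nu(r)=d$. From a configuration $(\ell,\nu)\in L\times D^R$ and on an input $(a,d)\in\Sigma\times D$, a transition $(\ell,a,\varphi,\mathsf{up},\ell')\in T$ may be fired if $(\nu,d)$ satisfies $\varphi$; it leads to $(\ell',\nu')$ where $\nu'(r)=d$ for $r\in\mathsf{up}$ and $\nu'(r)=\nu(r)$ otherwise. $\mathcal A$ is complete and deterministic if every configuration has exactly one successor configuration on every input. A nonempty data word $v\in(\Sigma\times D)^+$ is synchronizing for $\mathcal A$ if reading $v$ from all configurations in $L\times D^R$ leads to one and the same configuration; $\mathrm{data}(v)\subseteq D$ is the set of data values occurring in $v$. Let $\mathcal A=(L,R,\Sigma,T)$ be a complete deterministic register automaton with $k\ge 1$ registers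 over $D$, let $v=(a_1,d_1)\cdots(a_n,d_n)$ be a synchronizing data word for $\mathcal A$, and let $\ell\in L$. Then there exist an index $1\le m\le n$, transitions $t_1,\dots,t_m\in T$, and a nonempty set $\mathsf{up}\subseteq R$, such that for every register valuation $\nu$ with $\nu(r)\notin\mathrm{data}(v)$ for all $r\in R$, the unique run of $\mathcal A$ from $(\ell,\nu)$ over the prefix $(a_1,d_1)\cdots(a_m,d_m)$ of $v$ fires exactly the transitions $t_1,\dots,t_m$ in this order (uniquely so up to guards: any other sequence of transitions that induces the same run differs from $t_1,\dots,t_m$ at most in the guards). Moreover, each of $t_1,\dots,t_{m-1}$ has empty update set, $t_m$ has update set $\mathsf{up}$, and the guard of each $t_j$ is implied by $\bigwedge_{r\in R}\neg(=r)$, that is, it is satisfied by every $(\nu',d')\in D^R\times D$ with $\nu'(r)\ne d'$ for all $r\in R$. -/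

import Mathlib

namespace RegAut

/-- Register constraints over a set `R` of registers: built from the atom `true` and
the atoms `(= r)` for `r ∈ R` using conjunction and negation. -/
inductive Constraint (R : Type*) : Type _
  | tt : Constraint R
  | eqReg : R → Constraint R
  | conj : Constraint R → Constraint R → Constraint R
  | neg : Constraint R → Constraint R

/-- `φ.Sat ν d`: the pair `(ν, d)` of a register valuation and a datum satisfies `φ`. -/
def Constraint.Sat {R D : Type*} (ν : R → D) (d : D) : Constraint R → Prop
  | .tt => True
  | .eqReg r => ν r = d
  | .conj φ ψ => φ.Sat ν d ∧ ψ.Sat ν d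
  | .neg φ => ¬ φ.Sat ν d

/-- An element `(ℓ, a, φ, up, ℓ')` of `L × Σ × Φ(R) × 2^R × L`. -/
@[ext]
structure Transition (L R A : Type*) where
  source : L
  letter : A
  guard : Constraint R
  update : Set R
  target : L

/-- A register automaton with locations `L`, registers `R` and alphabet `A` is given by
its transition relation. -/
structure RegisterAutomaton (L R A : Type*) where
  transitions : Set (Transition L R A)

/-- A configuration: a location together with a register valuation. -/
abbrev Config (L R D : Type*) : Type _ := L × (R → D)

open Classical in
/-- The update `ν[up := d]` of a register valuation. -/
noncomputable def updateVal {R D : Type*} (ν : R → D) (up : Set R) (d : D) : R → D :=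
  fun r => if r ∈ up then d else ν r

/-- The transition `t` may be fired from the configuration `q` on the input `i`, and
leads to the configuration `q'`. -/
def Transition.Fires {L R A D : Type*} (t : Transition L R A) (q : Config L R D) (i : A × D)
    (q' : Config L R D) : Prop :=
  t.source = q.1 ∧ t.letter = i.1 ∧ t.guard.Sat q.2 i.2 ∧
    q' = (t.target, updateVal q.2 t.update i.2)

/-- The set `post(q, (a, d))` of successor configurations. -/
def post {L R A D : Type*} (𝓡 : RegisterAutomaton L R A) (q : Config L R D) (i : A × D) :
    Set (Config L R D) :=
  {q' | ∃ t ∈ 𝓡.transitions, t.Fires q i q'}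

/-- `post` of a set of configurations on a data word. -/
def postWord {L R A D : Type*} (𝓡 : RegisterAutomaton L R A) :
    Set (Config L R D) → List (A × D) → Set (Config L R D)
  | S, [] => S
  | S, i :: w => postWord 𝓡 (⋃ q ∈ S, post 𝓡 q i) w

/-- Completeness over the data domain `D`: every configuration has at least one successor
on every input. -/
def IsComplete (D : Type*) {L R A : Type*} (𝓡 : RegisterAutomaton L R A) : Prop :=
  ∀ (q : Config L R D) (i : A × D), (post 𝓡 q i).Nonempty

/-- Determinism over the data domain `D`: every configuration has at most one successor
on every input. -/
def IsDeterministic (D : Type*) {L R A : Type*} (𝓡 : RegisterAutomaton L R A) : Prop :=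
  ∀ (q : Config L R D) (i : A × D), (post 𝓡 q i).Subsingleton

/-- The set of data values occurring in a data word. -/
def data {A D : Type*} (w : List (A × D)) : Set D := {d | ∃ a, (a, d) ∈ w}

/-- A synchronizing data word: a nonempty data word sending the set of all
configurations to a single configuration. -/
def IsSynchronizing {L R A D : Type*} (𝓡 : RegisterAutomaton L R A) (w : List (A × D)) : Prop :=
  w ≠ [] ∧ ∃ q : Config L R D, postWord 𝓡 Set.univ w = {q}

/-- `IsRun 𝓡 q₀ w [q₁, …, qₙ]`: the sequence `q₀ q₁ ⋯ qₙ` is a run over the data word `w`. -/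
def IsRun {L R A D : Type*} (𝓡 : RegisterAutomaton L R A) :
    Config L R D → List (A × D) → List (Config L R D) → Prop
  | _, [], [] => True
  | q, i :: w, q' :: ρ => q' ∈ post 𝓡 q i ∧ IsRun 𝓡 q' w ρ
  | _, [], _ :: _ => False
  | _, _ :: _, [] => False

/-- `RunFires 𝓡 q₀ w [q₁, …, qₙ] [t₁, …, tₙ]`: each `tⱼ` is a transition of `𝓡` which
leads from `qⱼ₋₁` to `qⱼ` on the `j`-th input of `w`. -/
def RunFires {L R A D : Type*} (𝓡 : RegisterAutomaton L R A) :
    Config L R D → List (A × D) → List (Config L R D) → List (Transition L R A) → Prop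
  | _, [], [], [] => True
  | q, i :: w, q' :: ρ, t :: ts =>
      (t ∈ 𝓡.transitions ∧ t.Fires q i q') ∧ RunFires 𝓡 q' w ρ ts
  | _, _, _, _ => False

/-- Two transitions that differ at most in their guards. -/
def Transition.SameUpToGuard {L R A : Type*} (t t' : Transition L R A) : Prop :=
  t.source = t'.source ∧ t.letter = t'.letter ∧ t.update = t'.update ∧ t.target = t'.target

/-- The guard `φ` holds whenever the input datum differs from the contents of all
registers, i.e. `φ` is implied by the conjunction of all the inequalities `(≠ r)`. -/
def Constraint.HoldsOnFresh (D : Type*) {R : Type*} (φ : Constraint R) : Prop :=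
  ∀ (ν : R → D) (d : D), (∀ r, ν r ≠ d) → φ.Sat ν d

end RegAut

/-!
A fresh datum, one stored in no register, falsifies every atom `(= r)`, so the truth of a guard on
fresh data depends on the guard alone. By completeness, every location and letter therefore have a
transition that fires on every fresh datum. Follow these transitions along the word, starting
with a valuation that avoids its data: as long as no register is updated, the valuation does not
change and the next datum is fresh again. If no update ever happened, every such valuation would
survive unchanged to the end of the word, at a common location, and two different ones would not
be synchronized. The run up to the first update is unique by determinism, and it determines its
transitions up to guards because writing a fresh datum reveals which registers were updated.
-/

namespace RegAut

variable {L R A D : Type*} {𝓡 : RegisterAutomaton L R A} {ℓ ℓ' : L} {i : A × D}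
  {u w : List (A × D)} {t t' : Transition L R A} {ss ts : List (Transition L R A)}
  {q p : Config L R D} {ν : R → D} {d : D}

theorem data_cons (i : A × D) (w : List (A × D)) : data (i :: w) = insert i.2 (data w) := by
  ext d
  simp only [data, List.mem_cons, Set.mem_ofPred_eq, Set.mem_insert_iff, exists_or, Prod.ext_iff,
    exists_and_right, exists_eq, true_and]

theorem data_append (u w : List (A × D)) : data (u ++ w) = data u ∪ data w := by
  ext d
  simp only [data, List.mem_append, Set.mem_ofPred_eq, Set.mem_union, exists_or]

theorem finite_data (w : List (A × D)) : (data w).Finite := by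
  induction w with
  | nil => simp [data]
  | cons i w ih => exact data_cons i w ▸ ih.insert i.2

theorem Constraint.sat_iff_sat_of_fresh (φ : Constraint R) {ν' : R → D} {d' : D}
    (h : ∀ r, ν r ≠ d) (h' : ∀ r, ν' r ≠ d') : φ.Sat ν d ↔ φ.Sat ν' d' := by
  induction φ with
  | tt => exact Iff.rfl
  | eqReg r => exact iff_of_false (h r) (h' r)
  | conj φ ψ ihφ ihψ => exact and_congr ihφ ihψ
  | neg φ ih => exact not_congr ih

theorem Constraint.Sat.holdsOnFresh {φ : Constraint R} (hφ : φ.Sat ν d) (h : ∀ r, ν r ≠ d) :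
    φ.HoldsOnFresh D :=
  fun _ _ h' => (φ.sat_iff_sat_of_fresh h h').1 hφ

theorem updateVal_empty (ν : R → D) (d : D) : updateVal ν ∅ d = ν := by
  funext r
  simp [updateVal]

theorem updateVal_apply_eq_iff {up : Set R} {r : R} (h : ν r ≠ d) :
    updateVal ν up d r = d ↔ r ∈ up := by
  by_cases hr : r ∈ up <;> simp [updateVal, hr, h]

theorem updateVal_injective_of_fresh (h : ∀ r, ν r ≠ d) :
    Function.Injective fun up => updateVal ν up d := by
  intro up up' heq
  ext r
  rw [← updateVal_apply_eq_iff (h r), ← updateVal_apply_eq_iff (up := up') (h r)]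
  exact Eq.congr_left (congrFun heq r)

theorem Transition.Fires.sameUpToGuard (hf : t.Fires q i p) (hf' : t'.Fires q i p)
    (h : ∀ r, q.2 r ≠ i.2) : t.SameUpToGuard t' := by
  obtain ⟨hsource, hletter, -, rfl⟩ := hf
  obtain ⟨hsource', hletter', -, heq⟩ := hf'
  obtain ⟨htarget, hval⟩ := Prod.mk.inj heq
  exact ⟨hsource.trans hsource'.symm, hletter.trans hletter'.symm,
    updateVal_injective_of_fresh h hval, htarget⟩

theorem IsDeterministic.post_eq_singleton (hdet : IsDeterministic D 𝓡) (ht : t ∈ 𝓡.transitions)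
    (hf : t.Fires q i p) : post 𝓡 q i = {p} :=
  (hdet q i).eq_singleton_of_mem ⟨t, ht, hf⟩

theorem postWord_mono {S S' : Set (Config L R D)} (h : S ⊆ S') :
    postWord 𝓡 S w ⊆ postWord 𝓡 S' w := by
  induction w generalizing S S' with
  | nil => exact h
  | cons _ _ ih => exact ih (Set.biUnion_subset_biUnion_left h)

theorem IsSynchronizing.subsingleton_postWord (hw : IsSynchronizing 𝓡 w)
    (S : Set (Config L R D)) : (postWord 𝓡 S w).Subsingleton := by
  obtain ⟨-, q, hq⟩ := hw
  exact Set.subsingleton_singleton.anti (hq ▸ postWord_mono (Set.subset_univ S))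

theorem isRun_nil_iff {ρ : List (Config L R D)} : IsRun 𝓡 q [] ρ ↔ ρ = [] := by
  cases ρ <;> simp [IsRun]

theorem isRun_cons_iff {ρ : List (Config L R D)} :
    IsRun 𝓡 q (i :: w) ρ ↔ ∃ p ∈ post 𝓡 q i, ∃ ρ', IsRun 𝓡 p w ρ' ∧ ρ = p :: ρ' := by
  cases ρ <;> simp [IsRun]

/-- There is exactly one run from `q` over `w`, and it fires the transitions `ts`, which are
determined up to their guards. -/
def RunsUniquelyAlong (𝓡 : RegisterAutomaton L R A) (q : Config L R D) (w : List (A × D))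
    (ts : List (Transition L R A)) : Prop :=
  ∃ ρ : List (Config L R D), (∀ ρ', IsRun 𝓡 q w ρ' ↔ ρ' = ρ) ∧ RunFires 𝓡 q w ρ ts ∧
    ∀ ts', RunFires 𝓡 q w ρ ts' → List.Forall₂ Transition.SameUpToGuard ts' ts

theorem RunsUniquelyAlong.nil (q : Config L R D) : RunsUniquelyAlong 𝓡 q [] [] := by
  refine ⟨[], fun _ => isRun_nil_iff, trivial, ?_⟩
  rintro (_ | ⟨t, ts⟩) hts
  · exact .nil
  · exact hts.elim

theorem RunsUniquelyAlong.cons (hdet : IsDeterministic D 𝓡) (ht : t ∈ 𝓡.transitions)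
    (hf : t.Fires q i p) (hfresh : ∀ r, q.2 r ≠ i.2) (h : RunsUniquelyAlong 𝓡 p w ts) :
    RunsUniquelyAlong 𝓡 q (i :: w) (t :: ts) := by
  obtain ⟨ρ, hrun, hfires, huniq⟩ := h
  refine ⟨p :: ρ, fun ρ' => ?_, ⟨⟨ht, hf⟩, hfires⟩, ?_⟩
  · simp only [isRun_cons_iff, hdet.post_eq_singleton ht hf, Set.mem_singleton_iff,
      exists_eq_left, hrun]
  · rintro (_ | ⟨t', ts'⟩) hts'
    · exact hts'.elim
    · exact .cons (hts'.1.2.sameUpToGuard hf hfresh) (huniq ts' hts'.2)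

/-- `t` is a transition of `𝓡` that can be fired at the location `ℓ` on the letter `a` together
with any datum stored in no register. -/
structure IsFreshStep (D : Type*) (𝓡 : RegisterAutomaton L R A) (ℓ : L) (a : A)
    (t : Transition L R A) : Prop where
  mem : t ∈ 𝓡.transitions
  source_eq : t.source = ℓ
  letter_eq : t.letter = a
  holdsOnFresh : t.guard.HoldsOnFresh D

theorem IsComplete.exists_isFreshStep [Nontrivial D] (hcomp : IsComplete D 𝓡) (ℓ : L) (a : A) :
    ∃ t, IsFreshStep D 𝓡 ℓ a t := by
  obtain ⟨x, y, hxy⟩ := exists_pair_ne D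
  obtain ⟨_, t, ht, hsource, hletter, hsat, -⟩ := hcomp (ℓ, fun _ => x) (a, y)
  exact ⟨t, ht, hsource, hletter, hsat.holdsOnFresh fun _ => hxy⟩

theorem IsFreshStep.fires (h : IsFreshStep D 𝓡 ℓ i.1 t) (hν : ∀ r, ν r ≠ i.2) :
    t.Fires (ℓ, ν) i (t.target, updateVal ν t.update i.2) :=
  ⟨h.source_eq, h.letter_eq, h.holdsOnFresh ν i.2 hν, rfl⟩

theorem IsFreshStep.fires_of_update_eq_empty (h : IsFreshStep D 𝓡 ℓ i.1 t) (hup : t.update = ∅)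
    (hν : ∀ r, ν r ≠ i.2) : t.Fires (ℓ, ν) i (t.target, ν) := by
  simpa only [hup, updateVal_empty] using h.fires hν

/-- `SilentPath 𝓡 ℓ w ts ℓ'`: the transitions `ts` lead from `ℓ` to `ℓ'` along the letters of `w`,
each of them can be fired on any datum stored in no register, and none updates a register. -/
inductive SilentPath (𝓡 : RegisterAutomaton L R A) :
    L → List (A × D) → List (Transition L R A) → L → Prop
  | nil (ℓ : L) : SilentPath 𝓡 ℓ [] [] ℓ
  | cons {ℓ ℓ' : L} {i : A × D} {w : List (A × D)} {t : Transition L R A}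
      {ts : List (Transition L R A)} (step : IsFreshStep D 𝓡 ℓ i.1 t) (update_eq : t.update = ∅)
      (tail : SilentPath 𝓡 t.target w ts ℓ') : SilentPath 𝓡 ℓ (i :: w) (t :: ts) ℓ'

namespace SilentPath

theorem length_eq (h : SilentPath 𝓡 ℓ w ts ℓ') : ts.length = w.length := by
  induction h with
  | nil => rfl
  | cons _ _ _ ih => exact congrArg (· + 1) ih

theorem forall_mem (h : SilentPath 𝓡 ℓ w ts ℓ') :
    ∀ t ∈ ts, t ∈ 𝓡.transitions ∧ t.guard.HoldsOnFresh D ∧ t.update = ∅ := by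
  induction h with
  | nil => exact List.forall_mem_nil _
  | cons step hup _ ih => exact List.forall_mem_cons.2 ⟨⟨step.mem, step.holdsOnFresh, hup⟩, ih⟩

theorem mem_postWord (h : SilentPath 𝓡 ℓ w ts ℓ') (hν : ∀ r, ν r ∉ data w)
    {S : Set (Config L R D)} (hS : (ℓ, ν) ∈ S) : (ℓ', ν) ∈ postWord 𝓡 S w := by
  induction h generalizing S with
  | nil => exact hS
  | cons step hup _ ih =>
    simp only [data_cons, Set.mem_insert_iff, not_or, forall_and] at hν
    exact ih hν.2 (Set.mem_biUnion hS ⟨_, step.mem, step.fires_of_update_eq_empty hup hν.1⟩)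

theorem runsUniquelyAlong_append (h : SilentPath 𝓡 ℓ u ss ℓ') (hdet : IsDeterministic D 𝓡)
    (hν : ∀ r, ν r ∉ data u) (hw : RunsUniquelyAlong 𝓡 (ℓ', ν) w ts) :
    RunsUniquelyAlong 𝓡 (ℓ, ν) (u ++ w) (ss ++ ts) := by
  induction h with
  | nil => exact hw
  | cons step hup _ ih =>
    simp only [data_cons, Set.mem_insert_iff, not_or, forall_and] at hν
    exact .cons hdet step.mem (step.fires_of_update_eq_empty hup hν.1) hν.1 (ih hν.2 hw)

end SilentPath

theorem IsComplete.exists_silentPath_or_exists_update [Nontrivial D] (hcomp : IsComplete D 𝓡)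
    (w : List (A × D)) (ℓ : L) :
    (∃ ts ℓ', SilentPath 𝓡 ℓ w ts ℓ') ∨
      ∃ u i u' ts ℓ' t, w = u ++ i :: u' ∧ SilentPath 𝓡 ℓ u ts ℓ' ∧
        IsFreshStep D 𝓡 ℓ' i.1 t ∧ t.update.Nonempty := by
  induction w generalizing ℓ with
  | nil => exact .inl ⟨[], ℓ, .nil ℓ⟩
  | cons i w ih =>
    obtain ⟨t, step⟩ := hcomp.exists_isFreshStep ℓ i.1
    rcases t.update.eq_empty_or_nonempty with hup | hup
    · rcases ih t.target with ⟨ts, ℓ', path⟩ | ⟨u, j, u', ts, ℓ', t', rfl, path, step', hup'⟩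
      · exact .inl ⟨t :: ts, ℓ', .cons step hup path⟩
      · exact .inr ⟨i :: u, j, u', t :: ts, ℓ', t', rfl, .cons step hup path, step', hup'⟩
    · exact .inr ⟨[], i, w, [], ℓ, t, rfl, .nil ℓ, step, hup⟩

theorem not_silentPath_of_subsingleton_postWord [Nonempty R] (hw : (data w)ᶜ.Nontrivial)
    (hsync : (postWord 𝓡 {q : Config L R D | q.1 = ℓ} w).Subsingleton) :
    ¬ SilentPath 𝓡 ℓ w ts ℓ' := by
  intro path
  obtain ⟨x, hx, y, hy, hxy⟩ := hw
  have const_mem {z : D} (hz : z ∉ data w) :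
      (ℓ', fun _ => z) ∈ postWord 𝓡 {q : Config L R D | q.1 = ℓ} w :=
    path.mem_postWord (fun _ => hz) rfl
  have hconst : (fun _ : R => x) = fun _ => y :=
    congrArg Prod.snd (hsync (const_mem hx) (const_mem hy))
  exact hxy (Function.const_injective hconst)

end RegAut

open RegAut in
theorem stmt16_general {L R A D : Type*} [Nonempty R] (𝓡 : RegisterAutomaton L R A)
    (hcomp : IsComplete D 𝓡) (hdet : IsDeterministic D 𝓡) (v : List (A × D))
    (hfresh : (data v)ᶜ.Nontrivial) (ℓ : L)
    (hsync : (postWord 𝓡 {q : Config L R D | q.1 = ℓ} v).Subsingleton) :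
    ∃ m : ℕ, 1 ≤ m ∧ m ≤ v.length ∧
    ∃ ts : List (Transition L R A), ts.length = m ∧ (∀ t ∈ ts, t ∈ 𝓡.transitions) ∧
    ∃ up : Set R, up.Nonempty ∧
      (∀ ν : R → D, (∀ r : R, ν r ∉ data v) → RunsUniquelyAlong 𝓡 (ℓ, ν) (v.take m) ts) ∧
      (∀ t ∈ ts, t.guard.HoldsOnFresh D) ∧
      (∀ t ∈ ts.dropLast, t.update = ∅) ∧
      (∀ t ∈ ts.getLast?, t.update = up) := by
  have : Nontrivial D := Set.nontrivial_of_nontrivial hfresh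
  rcases hcomp.exists_silentPath_or_exists_update v ℓ with
    ⟨_, _, path⟩ | ⟨u, i, u', ss, ℓ', t, rfl, path, step, hup⟩
  · exact absurd path (not_silentPath_of_subsingleton_postWord hfresh hsync)
  · refine ⟨u.length + 1, by simp, by simp, ss ++ [t], by simp [path.length_eq], ?_, t.update, hup,
      fun ν hν => ?_, ?_, ?_, by simp⟩
    · simpa [or_imp, forall_and, step.mem] using fun s hs => (path.forall_mem s hs).1
    · simp only [data_append, data_cons, Set.mem_union, Set.mem_insert_iff, not_or,
        forall_and] at hν
      obtain ⟨hu, hi, -⟩ := hν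
      have hlast : RunsUniquelyAlong 𝓡 (ℓ', ν) [i] [t] :=
        .cons hdet step.mem (step.fires hi) hi (.nil _)
      rw [List.take_length_add_append]
      exact path.runsUniquelyAlong_append hdet hu hlast
    · simpa [or_imp, forall_and, step.holdsOnFresh] using fun s hs => (path.forall_mem s hs).2.1
    · simpa using fun s hs => (path.forall_mem s hs).2.2

theorem stmt16 {L R A D : Type*} [Finite L] [Finite R] [Nonempty R] [Finite A] [Infinite D]
    (𝓡 : RegAut.RegisterAutomaton L R A)
    (hcomp : RegAut.IsComplete D 𝓡) (hdet : RegAut.IsDeterministic D 𝓡)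
    (v : List (A × D)) (hv : RegAut.IsSynchronizing 𝓡 v) (ℓ : L) :
    ∃ m : ℕ, 1 ≤ m ∧ m ≤ v.length ∧
    ∃ ts : List (RegAut.Transition L R A), ts.length = m ∧ (∀ t ∈ ts, t ∈ 𝓡.transitions) ∧
    ∃ up : Set R, up.Nonempty ∧
      (∀ ν : R → D, (∀ r : R, ν r ∉ RegAut.data v) →
        ∃ ρ : List (RegAut.Config L R D),
          (∀ ρ', RegAut.IsRun 𝓡 (ℓ, ν) (v.take m) ρ' ↔ ρ' = ρ) ∧
          RegAut.RunFires 𝓡 (ℓ, ν) (v.take m) ρ ts ∧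
          (∀ ts', RegAut.RunFires 𝓡 (ℓ, ν) (v.take m) ρ ts' →
            List.Forall₂ RegAut.Transition.SameUpToGuard ts' ts)) ∧
      (∀ t ∈ ts, t.guard.HoldsOnFresh D) ∧
      (∀ t ∈ ts.dropLast, t.update = ∅) ∧
      (∀ t ∈ ts.getLast?, t.update = up) :=
  stmt16_general 𝓡 hcomp hdet v (RegAut.finite_data v).infinite_compl.nontrivial ℓ
    (hv.subsingleton_postWord _)
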